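/- arXiv:0908.2008 — 5 statements merged into one kernel-verified Lean document; each statement's English description precedes it below -/
import Mathlib

section
/- For every real Δ > 0 and every real x ≠ 0, ∫₀^∞ (e^{−λ|x|} − e^{−λ}) · (2(1 − cos(2Δλ))/λ) dλ = log((4Δ² + x²)/x²) − log(4Δ² + 1). -/
/-!
With `a > 0` fixed, put `I(b) = ∫₀^∞ e^{-la} · 2(1 - cos(bl))/l dl`. Differentiating under the
integral sign removes the factor `1/l`, and `I'(b) = 2 ∫₀^∞ e^{-la} sin(bl) dl = 2b/(a² + b²)` by
the Laplace transform of the sine. This is also the derivative of `log((a² + b²)/a²)`, and both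
functions vanish at `b = 0`, so they agree. The claim is the difference of the cases `a = |x|` and
`a = 1` at `b = 2Δ`.
-/

open Real MeasureTheory

/-- The Laplace transform of `sin (b l)`, read off as the imaginary part of
`∫ exp ((-a + b i) l) = 1 / (a - b i)`. -/
lemma integral_exp_mul_sin {a : ℝ} (ha : 0 < a) (b : ℝ) :
    ∫ l in Set.Ioi (0 : ℝ), Real.exp (-l * a) * Real.sin (b * l) = b / (a ^ 2 + b ^ 2) := by
  have hre : (⟨-a, b⟩ : ℂ).re < 0 := by simpa using ha
  have h1 := integral_exp_mul_complex_Ioi hre 0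
  have h2 := integral_im (integrableOn_exp_mul_complex_Ioi hre 0)
  rw [h1] at h2
  have h3 : ∀ l : ℝ, RCLike.im (Complex.exp ((⟨-a, b⟩ : ℂ) * l))
      = Real.exp (-l * a) * Real.sin (b * l) := by
    intro l
    simp [Complex.exp_im, mul_comm]
  simp only [h3] at h2
  rw [h2]
  simp [Complex.div_im, Complex.normSq_apply]
  ring

lemma one_sub_cos_le_abs (t : ℝ) : 1 - Real.cos t ≤ |t| := by
  rcases le_total |t| 2 with h | h
  · have := Real.one_sub_sq_div_two_le_cos (x := t)
    nlinarith [abs_nonneg t, sq_abs t]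
  · linarith [Real.neg_one_le_cos t]

lemma integrableOn_exp_neg_mul {a : ℝ} (ha : 0 < a) :
    IntegrableOn (fun l : ℝ => Real.exp (-l * a)) (Set.Ioi 0) := by
  have := exp_neg_integrableOn_Ioi 0 ha
  simpa [mul_comm] using this

/-- The singularity at `0` is removable because `1 - cos (b l) ≤ |b| l`. -/
lemma integrableOn_exp_mul_one_sub_cos_div {a : ℝ} (ha : 0 < a) (b : ℝ) :
    IntegrableOn (fun l : ℝ => Real.exp (-l * a) * (2 * (1 - Real.cos (b * l)) / l))
      (Set.Ioi 0) := by
  refine Integrable.mono' ((integrableOn_exp_neg_mul ha).mul_const (2 * |b|))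
    (by fun_prop) ?_
  filter_upwards [ae_restrict_mem measurableSet_Ioi] with l hl
  have hl : 0 < l := hl
  have h := one_sub_cos_le_abs (b * l)
  rw [abs_mul, abs_of_pos hl] at h
  have h0 : 0 ≤ 1 - Real.cos (b * l) := by linarith [Real.cos_le_one (b * l)]
  rw [Real.norm_of_nonneg (by positivity)]
  gcongr
  rw [div_le_iff₀ hl]
  linarith

lemma hasDerivAt_integral_exp_mul_one_sub_cos_div {a : ℝ} (ha : 0 < a) (b : ℝ) :
    HasDerivAt (fun b : ℝ => ∫ l in Set.Ioi (0 : ℝ),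
      Real.exp (-l * a) * (2 * (1 - Real.cos (b * l)) / l)) (2 * (b / (a ^ 2 + b ^ 2))) b := by
  have key := (hasDerivAt_integral_of_dominated_loc_of_deriv_le
    (μ := volume.restrict (Set.Ioi (0 : ℝ)))
    (F := fun b l : ℝ => Real.exp (-l * a) * (2 * (1 - Real.cos (b * l)) / l))
    (F' := fun b l : ℝ => 2 * (Real.exp (-l * a) * Real.sin (b * l)))
    (x₀ := b) (s := Set.univ) (bound := fun l => 2 * Real.exp (-l * a))
    Filter.univ_mem (Filter.Eventually.of_forall fun b => by fun_prop)
    (integrableOn_exp_mul_one_sub_cos_div ha b) (by fun_prop) ?_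
    ((integrableOn_exp_neg_mul ha).const_mul 2) ?_).2
  · rwa [integral_const_mul, integral_exp_mul_sin ha] at key
  · refine Filter.Eventually.of_forall fun l c _ => ?_
    rw [norm_mul, norm_mul, Real.norm_of_nonneg (Real.exp_pos _).le, Real.norm_eq_abs,
      Real.norm_eq_abs, abs_two]
    nlinarith [Real.exp_pos (-l * a), Real.abs_sin_le_one (c * l)]
  · filter_upwards [ae_restrict_mem measurableSet_Ioi] with l hl c _
    have hl : l ≠ 0 := ne_of_gt hl
    have h := ((((((hasDerivAt_id c).mul_const l).cos).const_sub 1).const_mul 2).div_const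
      l).const_mul (Real.exp (-l * a))
    refine h.congr_deriv ?_
    simp only [id]
    field_simp

lemma integral_exp_mul_one_sub_cos_div {a : ℝ} (ha : 0 < a) (b : ℝ) :
    ∫ l in Set.Ioi (0 : ℝ), Real.exp (-l * a) * (2 * (1 - Real.cos (b * l)) / l)
      = Real.log ((a ^ 2 + b ^ 2) / a ^ 2) := by
  have hlog : ∀ b : ℝ, HasDerivAt (fun b : ℝ => Real.log ((a ^ 2 + b ^ 2) / a ^ 2))
      (2 * (b / (a ^ 2 + b ^ 2))) b := by
    intro b
    have hpos : (a ^ 2 + b ^ 2) / a ^ 2 ≠ 0 := by positivity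
    refine (((((hasDerivAt_id b).pow 2).const_add (a ^ 2)).div_const (a ^ 2)).log
      hpos).congr_deriv ?_
    simp only [id]
    have hab : a ^ 2 + b ^ 2 ≠ 0 := by positivity
    simp
    field_simp
  have hd := fun b => (hasDerivAt_integral_exp_mul_one_sub_cos_div ha b).sub (hlog b)
  have hc := is_const_of_deriv_eq_zero (fun b => (hd b).differentiableAt)
    (fun b => by rw [(hd b).deriv, sub_self]) b 0
  have ha' : a ≠ 0 := ha.ne'
  simpa [ha', sub_eq_zero] using hc

theorem integral_measure_identity (Δ : ℝ) (hΔ : 0 < Δ) (x : ℝ) (hx : x ≠ 0) :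
    ∫ l in Set.Ioi (0 : ℝ),
        (Real.exp (-l * |x|) - Real.exp (-l)) * (2 * (1 - Real.cos (2 * Δ * l)) / l)
      = Real.log ((4 * Δ ^ 2 + x ^ 2) / x ^ 2) - Real.log (4 * Δ ^ 2 + 1) := by
  have hx' : 0 < |x| := abs_pos.mpr hx
  have h := integral_sub (integrableOn_exp_mul_one_sub_cos_div hx' (2 * Δ))
    (integrableOn_exp_mul_one_sub_cos_div one_pos (2 * Δ))
  rw [integral_exp_mul_one_sub_cos_div hx', integral_exp_mul_one_sub_cos_div one_pos] at h
  simp only [mul_one, ← sub_mul] at h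
  rw [h, sq_abs]
  congr 2 <;> ring
end

section
/- For every real Δ > 0 and every real t, ∫_{−∞}^{∞} log((4Δ² + x²)/x²) e^{−2πitx} dx = ∫₀^∞ (2λ/(λ² + 4π²t²)) · (2(1 − cos(2Δλ))/λ) dλ. -/
/-! The logarithm is a Laplace transform in `|x|`: for `x ≠ 0`,
`∫₀^∞ 2(1 - cos aλ)/λ · e^{-λ|x|} dλ = log ((a² + x²)/x²)`. This follows by writing
`2(1 - cos aλ)/λ = ∫₀^a 2 sin(sλ) ds`, exchanging the integrals, and integrating
`∫₀^∞ 2 sin(sλ) e^{-λ|x|} dλ = 2s/(s² + x²)` over `s` (`integral_weight_mul_exp`).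
Insert this representation with `a = 2Δ` into the Fourier integral and exchange the order of
integration; the inner integral becomes the Fourier transform `2λ/(λ² + 4π²t²)` of `e^{-λ|x|}`
(`integral_exp_abs_mul_exp`). Fubini applies because the absolute value of the kernel integrates
over `x` to `4(1 - cos aλ)/λ²`, which is integrable on `(0, ∞)`. -/

open Real MeasureTheory Complex

lemma integral_sin_mul_exp {y : ℝ} (hy : 0 < y) (s : ℝ) :
    ∫ l in Set.Ioi (0 : ℝ), 2 * Real.sin (s * l) * Real.exp (-y * l)
      = 2 * s / (s ^ 2 + y ^ 2) := by
  have hre : ((-y + s * I : ℂ)).re < 0 := by simpa using hy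
  have hi := integrableOn_exp_mul_complex_Ioi hre 0
  have h := integral_exp_mul_complex_Ioi hre 0
  have him := integral_im hi
  rw [h] at him
  have hpt : ∀ l : ℝ, 2 * Real.sin (s * l) * Real.exp (-y * l)
      = 2 * RCLike.im (cexp ((-y + s * I) * l)) := by
    intro l
    simp [Complex.exp_im]
    ring
  simp_rw [hpt]
  rw [integral_const_mul, him]
  have : s ^ 2 + y ^ 2 ≠ 0 := by positivity
  simp [Complex.div_im, Complex.normSq_apply]
  rw [show y * y + s * s = s ^ 2 + y ^ 2 by ring]
  ring

/-- The Frullani-type representation of the logarithm as a Laplace transform in `|x|`. -/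
lemma integral_weight_mul_exp {a x : ℝ} (ha : 0 < a) (hx : x ≠ 0) :
    ∫ l in Set.Ioi (0 : ℝ), 2 * (1 - Real.cos (a * l)) / l * Real.exp (-l * |x|)
      = Real.log ((a ^ 2 + x ^ 2) / x ^ 2) := by
  have hy : 0 < |x| := abs_pos.mpr hx
  have hint : Integrable
      (Function.uncurry fun s l : ℝ => 2 * Real.sin (s * l) * Real.exp (-|x| * l))
      ((volume.restrict (Set.uIoc 0 a)).prod (volume.restrict (Set.Ioi 0))) := by
    have hE : Integrable (fun l : ℝ => Real.exp (-|x| * l)) (volume.restrict (Set.Ioi 0)) :=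
      integrableOn_exp_mul_Ioi (by linarith) 0
    have hc : Integrable (fun _ : ℝ => (2 : ℝ)) (volume.restrict (Set.uIoc 0 a)) := by
      rw [Set.uIoc_of_le ha.le]
      exact integrable_const _
    refine (hc.mul_prod hE).mono (by fun_prop) (Filter.Eventually.of_forall fun p => ?_)
    simp only [Function.uncurry, norm_mul, Real.norm_eq_abs]
    gcongr
    have := Real.abs_sin_le_one (p.1 * p.2)
    norm_num
    linarith
  have hsw := intervalIntegral_integral_swap hint
  have hL : ∫ s in (0 : ℝ)..a, ∫ l in Set.Ioi (0 : ℝ),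
      2 * Real.sin (s * l) * Real.exp (-|x| * l) = Real.log ((a ^ 2 + x ^ 2) / x ^ 2) := by
    simp_rw [integral_sin_mul_exp hy, sq_abs]
    have hpos : ∀ s : ℝ, 0 < s ^ 2 + x ^ 2 := fun s => by positivity
    have hd : ∀ s : ℝ, HasDerivAt (fun s : ℝ => Real.log (s ^ 2 + x ^ 2))
        (2 * s / (s ^ 2 + x ^ 2)) s := by
      intro s
      have := (((hasDerivAt_id s).pow 2).add_const (x ^ 2)).log (hpos s).ne'
      simpa using this
    rw [intervalIntegral.integral_eq_sub_of_hasDerivAt (fun s _ => hd s)]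
    · rw [Real.log_div (hpos a).ne' (by positivity)]
      simp
    · apply Continuous.intervalIntegrable
      exact Continuous.div (by fun_prop) (by fun_prop) fun s => (hpos s).ne'
  rw [← hL, hsw]
  refine setIntegral_congr_fun measurableSet_Ioi fun l hl => ?_
  have hl : 0 < l := hl
  have hd : ∀ s : ℝ, HasDerivAt (fun s : ℝ => -2 * Real.cos (s * l) / l)
      (2 * Real.sin (s * l)) s := by
    intro s
    have := ((((hasDerivAt_id s).mul_const l).cos).const_mul (-2)).div_const l
    refine this.congr_deriv ?_
    simp
    field_simp
  rw [intervalIntegral.integral_mul_const,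
    intervalIntegral.integral_eq_sub_of_hasDerivAt (fun s _ => hd s)]
  · rw [show -|x| * l = -l * |x| by ring]
    simp
    ring
  · apply Continuous.intervalIntegrable
    fun_prop

lemma exp_abs_mul_exp_Iic (l t : ℝ) : Set.EqOn
    (fun x : ℝ => (Real.exp (-l * |x|) : ℂ) * cexp (-(2 * π * I * t * x)))
    (fun x : ℝ => cexp ((l - 2 * π * t * I) * x)) (Set.Iic 0) := by
  intro x hx
  simp only []
  rw [abs_of_nonpos hx, Complex.ofReal_exp, ← Complex.exp_add]
  congr 1
  push_cast
  ring

lemma exp_abs_mul_exp_Ioi (l t : ℝ) : Set.EqOn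
    (fun x : ℝ => (Real.exp (-l * |x|) : ℂ) * cexp (-(2 * π * I * t * x)))
    (fun x : ℝ => cexp ((-l - 2 * π * t * I) * x)) (Set.Ioi 0) := by
  intro x hx
  simp only []
  rw [abs_of_pos hx, Complex.ofReal_exp, ← Complex.exp_add]
  congr 1
  push_cast
  ring

lemma integrableOn_exp_abs_mul_exp {l : ℝ} (hl : 0 < l) (t : ℝ) :
    IntegrableOn (fun x : ℝ => (Real.exp (-l * |x|) : ℂ) * cexp (-(2 * π * I * t * x)))
      (Set.Iic 0) ∧
    IntegrableOn (fun x : ℝ => (Real.exp (-l * |x|) : ℂ) * cexp (-(2 * π * I * t * x)))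
      (Set.Ioi 0) := by
  constructor
  · rw [integrableOn_congr_fun (exp_abs_mul_exp_Iic l t) measurableSet_Iic]
    exact integrableOn_exp_mul_complex_Iic (by simpa using hl) 0
  · rw [integrableOn_congr_fun (exp_abs_mul_exp_Ioi l t) measurableSet_Ioi]
    exact integrableOn_exp_mul_complex_Ioi (by simpa using hl) 0

lemma integrable_exp_abs_mul_exp {l : ℝ} (hl : 0 < l) (t : ℝ) :
    Integrable (fun x : ℝ => (Real.exp (-l * |x|) : ℂ) * cexp (-(2 * π * I * t * x))) := by
  rw [← integrableOn_univ, ← Set.Iic_union_Ioi (a := (0 : ℝ))]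
  exact (integrableOn_exp_abs_mul_exp hl t).1.union (integrableOn_exp_abs_mul_exp hl t).2

lemma integral_exp_abs_mul_exp {l : ℝ} (hl : 0 < l) (t : ℝ) :
    ∫ x : ℝ, (Real.exp (-l * |x|) : ℂ) * cexp (-(2 * π * I * t * x))
      = ((2 * l / (l ^ 2 + 4 * π ^ 2 * t ^ 2) : ℝ) : ℂ) := by
  obtain ⟨h1, h2⟩ := integrableOn_exp_abs_mul_exp hl t
  rw [← intervalIntegral.integral_Iic_add_Ioi h1 h2,
    setIntegral_congr_fun measurableSet_Iic (exp_abs_mul_exp_Iic l t),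
    setIntegral_congr_fun measurableSet_Ioi (exp_abs_mul_exp_Ioi l t),
    integral_exp_mul_complex_Iic (by simpa using hl),
    integral_exp_mul_complex_Ioi (by simpa using hl)]
  have e1 : (l - 2 * π * t * I : ℂ) ≠ 0 := fun h => by
    have := congrArg Complex.re h
    simp at this
    exact hl.ne' this
  have e2 : (-l - 2 * π * t * I : ℂ) ≠ 0 := fun h => by
    have := congrArg Complex.re h
    simp at this
    exact hl.ne' this
  have e3 : ((l : ℂ) ^ 2 + 4 * π ^ 2 * t ^ 2) ≠ 0 := by
    have : l ^ 2 + 4 * π ^ 2 * t ^ 2 ≠ 0 := by positivity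
    exact_mod_cast this
  push_cast
  simp only [mul_zero, Complex.exp_zero]
  rw [div_add_div _ _ e1 e2, div_eq_div_iff (mul_ne_zero e1 e2) e3]
  ring_nf
  simp only [I_sq]
  ring

lemma integral_exp_abs {l : ℝ} (hl : 0 < l) : ∫ x : ℝ, Real.exp (-l * |x|) = 2 / l := by
  rw [integral_comp_abs (f := fun x => Real.exp (-l * x)), integral_exp_mul_Ioi (by linarith)]
  simp
  field_simp

/-- The bound `1 - cos u ≤ min (u² / 2) 2` dominates the integrand by a multiple of
`1 / (1 + l²)`. -/
lemma integrableOn_weight_div (a : ℝ) :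
    IntegrableOn (fun l : ℝ => 2 * (1 - Real.cos (a * l)) / l * (2 / l)) (Set.Ioi 0) := by
  refine ((integrable_inv_one_add_sq.const_mul (2 * a ^ 2 + 8)).integrableOn).mono'
    (by fun_prop) ?_
  refine (ae_restrict_mem measurableSet_Ioi).mono fun l hl => ?_
  have hl : 0 < l := hl
  have h1 := Real.one_sub_sq_div_two_le_cos (x := a * l)
  have h2 := Real.neg_one_le_cos (a * l)
  have h3 := Real.cos_le_one (a * l)
  rw [Real.norm_of_nonneg (mul_nonneg (div_nonneg (by linarith) hl.le) (by positivity)),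
    ← div_eq_mul_inv, div_mul_div_comm, div_le_div_iff₀ (by positivity) (by positivity)]
  nlinarith [mul_nonneg (sq_nonneg l) (by linarith : 0 ≤ 1 + Real.cos (a * l))]

lemma integrable_kernel (a t : ℝ) : Integrable
    (Function.uncurry fun x l : ℝ => ((2 * (1 - Real.cos (a * l)) / l : ℝ) : ℂ) *
      ((Real.exp (-l * |x|) : ℂ) * cexp (-(2 * π * I * t * x))))
    ((volume : Measure ℝ).prod (volume.restrict (Set.Ioi 0))) := by
  rw [integrable_prod_iff']
  · constructor
    · refine (ae_restrict_mem measurableSet_Ioi).mono fun l hl => ?_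
      simp only [Function.uncurry]
      exact (integrable_exp_abs_mul_exp hl t).const_mul _
    · refine (integrableOn_weight_div a).congr_fun (fun l hl => ?_) measurableSet_Ioi
      have hl : 0 < l := hl
      have h3 := Real.cos_le_one (a * l)
      have hn : ∀ x : ℝ, ‖((2 * (1 - Real.cos (a * l)) / l : ℝ) : ℂ) *
          ((Real.exp (-l * |x|) : ℂ) * cexp (-(2 * π * I * t * x)))‖
          = 2 * (1 - Real.cos (a * l)) / l * Real.exp (-l * |x|) := by
        intro x
        rw [norm_mul, norm_mul, Complex.norm_real, Complex.norm_real, Complex.norm_exp,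
          Real.norm_of_nonneg (div_nonneg (by linarith) hl.le),
          Real.norm_of_nonneg (Real.exp_pos _).le]
        simp
      simp only [Function.uncurry]
      simp_rw [hn]
      rw [integral_const_mul, integral_exp_abs hl]
  · apply Measurable.aestronglyMeasurable
    unfold Function.uncurry
    fun_prop

theorem fourier_transform_log_identity (Δ : ℝ) (hΔ : 0 < Δ) (t : ℝ) :
    ∫ x : ℝ, (Real.log ((4 * Δ ^ 2 + x ^ 2) / x ^ 2) : ℂ) *
        Complex.exp (-(2 * π * I * t * x))
      = ((∫ l in Set.Ioi (0 : ℝ),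
          (2 * l / (l ^ 2 + 4 * π ^ 2 * t ^ 2)) *
            (2 * (1 - Real.cos (2 * Δ * l)) / l) : ℝ) : ℂ) := by
  have hne : ∀ᵐ x : ℝ, x ≠ 0 := by
    simp [ae_iff, measure_singleton]
  have hlog : ∀ᵐ x : ℝ, (Real.log ((4 * Δ ^ 2 + x ^ 2) / x ^ 2) : ℂ) *
        Complex.exp (-(2 * π * I * t * x)) =
      ∫ l in Set.Ioi (0 : ℝ), ((2 * (1 - Real.cos (2 * Δ * l)) / l : ℝ) : ℂ) *
        ((Real.exp (-l * |x|) : ℂ) * cexp (-(2 * π * I * t * x))) := by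
    filter_upwards [hne] with x hx
    rw [show 4 * Δ ^ 2 = (2 * Δ) ^ 2 by ring,
      ← integral_weight_mul_exp (by positivity : 0 < 2 * Δ) hx]
    simp_rw [← mul_assoc _ _ (cexp _), ← Complex.ofReal_mul]
    rw [integral_mul_const, integral_complex_ofReal]
  rw [integral_congr_ae hlog, integral_integral_swap (integrable_kernel (2 * Δ) t),
    ← integral_complex_ofReal]
  refine setIntegral_congr_fun measurableSet_Ioi fun l hl => ?_
  rw [integral_const_mul, integral_exp_abs_mul_exp hl, ← Complex.ofReal_mul, mul_comm]
end

section
/- For every real Δ > 0, ∫₀^∞ (2/x − 1/sinh(x/2)) · (2(1 − cos(2Δx))/x) dx = 2 log 2 − 2 log(1 + e^{−4πΔ}). -/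
/-!
The partial fraction expansion of the hyperbolic cosecant,
`2/x - 1/sinh(x/2) = ∑_{n ≥ 1} (-1)^(n-1) 4x / (x² + (2πn)²)` (`hasSum_csch`, deduced from Mathlib's
expansion of the cotangent), turns the integrand into the alternating series with terms
`8 (1 - cos(2Δx)) / (x² + (2πn)²)`, which are nonnegative and decreasing in `n`. Its partial sums
therefore lie between `0` and the first term, which is integrable, so dominated convergence
permits termwise integration although the series of integrals converges only conditionally.

The integral of each term is given by `∫₀^∞ (1 - cos(ax)) / (x² + b²) dx = π/(2b) (1 - e^{-ab})`
(`integral_one_sub_cos`), which follows from Fourier inversion applied to `e^{-2πb|t|}`. With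
`q = e^{-4πΔ}` there remains `2 ∑ (-1)^(n-1) (1 - qⁿ) / n`. The limit of the partial sums is
evaluated along even indices: the part without `q` tends to `log 2` because it is a difference
`H_{2N} - H_N` of harmonic numbers, and the other part is the power series of `log (1 + q)`.
-/

open Real MeasureTheory
open Filter Topology FourierTransform

lemma integrable_inv_sq_add_sq {b : ℝ} (hb : 0 < b) :
    Integrable (fun x : ℝ => (x ^ 2 + b ^ 2)⁻¹) := by
  have h := (integrable_inv_one_add_sq.comp_div hb.ne').const_mul ((b ^ 2)⁻¹)
  refine h.congr (Eventually.of_forall fun x => ?_)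
  have : x ^ 2 + b ^ 2 ≠ 0 := by positivity
  have : 1 + (x / b) ^ 2 ≠ 0 := by positivity
  simp only
  field_simp
  ring

lemma integrable_cos_mul_inv (a : ℝ) {b : ℝ} (hb : 0 < b) :
    Integrable (fun x : ℝ => Real.cos (a * x) * (x ^ 2 + b ^ 2)⁻¹) := by
  refine (integrable_inv_sq_add_sq hb).bdd_mul (c := 1) ?_ ?_
  · exact (by fun_prop : Continuous fun x : ℝ => Real.cos (a * x)).aestronglyMeasurable
  · exact Eventually.of_forall fun x => by simpa using Real.abs_cos_le_one (a * x)

/-- The Fourier transform of a two-sided exponential is the centred Cauchy density of scale `b`. -/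
lemma fourier_exp_neg_abs {b : ℝ} (hb : 0 < b) (v : ℝ) :
    𝓕 (fun t : ℝ => Complex.exp (-(2 * π * b * |t| : ℝ))) v
      = ((b / π * (v ^ 2 + b ^ 2)⁻¹ : ℝ) : ℂ) := by
  have hpi := Real.pi_pos
  rw [Real.fourier_real_eq_integral_exp_smul]
  have h1 : Set.EqOn (fun t : ℝ => Complex.exp (↑(-2 * π * t * v) * Complex.I) •
      Complex.exp (-(2 * π * b * |t| : ℝ)))
      (fun t : ℝ => Complex.exp ((2 * π * (b - v * Complex.I)) * t)) (Set.Iic 0) := by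
    intro t ht
    simp only [smul_eq_mul, ← Complex.exp_add, abs_of_nonpos (Set.mem_Iic.mp ht)]
    congr 1; push_cast; ring
  have h2 : Set.EqOn (fun t : ℝ => Complex.exp (↑(-2 * π * t * v) * Complex.I) •
      Complex.exp (-(2 * π * b * |t| : ℝ)))
      (fun t : ℝ => Complex.exp ((-(2 * π * (b + v * Complex.I))) * t)) (Set.Ioi 0) := by
    intro t ht
    simp only [smul_eq_mul, ← Complex.exp_add, abs_of_pos (Set.mem_Ioi.mp ht)]
    congr 1; push_cast; ring
  have r1 : 0 < (2 * π * (b - v * Complex.I) : ℂ).re := by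
    simp [hpi, hb]
  have r2 : (-(2 * π * (b + v * Complex.I)) : ℂ).re < 0 := by
    simp [hpi, hb]
  rw [← intervalIntegral.integral_Iic_add_Ioi (b := 0)
      ((integrableOn_exp_mul_complex_Iic r1 0).congr_fun h1.symm measurableSet_Iic)
      ((integrableOn_exp_mul_complex_Ioi r2 0).congr_fun h2.symm measurableSet_Ioi),
    setIntegral_congr_fun measurableSet_Iic h1, setIntegral_congr_fun measurableSet_Ioi h2,
    integral_exp_mul_complex_Iic r1, integral_exp_mul_complex_Ioi r2]
  have n1 : (b - v * Complex.I : ℂ) ≠ 0 := fun h => by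
    have := congrArg Complex.re h; simp at this; exact hb.ne' this
  have n2 : (b + v * Complex.I : ℂ) ≠ 0 := fun h => by
    have := congrArg Complex.re h; simp at this; exact hb.ne' this
  have n3 : (v ^ 2 + b ^ 2 : ℂ) = (b - v * Complex.I) * (b + v * Complex.I) := by
    linear_combination (v : ℂ) ^ 2 * Complex.I_sq
  have n4 : (π : ℂ) ≠ 0 := by exact_mod_cast hpi.ne'
  push_cast
  rw [n3]
  simp only [mul_zero, Complex.exp_zero]
  field_simp
  ring

/-- The real part of the Fourier inversion formula for `t ↦ e^{-2πb|t|}`, at the point `a / (2π)`. -/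
lemma integral_cos_mul_inv {a b : ℝ} (ha : 0 ≤ a) (hb : 0 < b) :
    ∫ x : ℝ, Real.cos (a * x) * (x ^ 2 + b ^ 2)⁻¹ = π / b * Real.exp (-(a * b)) := by
  have hpi := Real.pi_pos
  set f : ℝ → ℂ := fun t => Complex.exp (-(2 * π * b * |t| : ℝ)) with hf
  have hcont : Continuous f := by fun_prop
  have hF : 𝓕 f = fun v : ℝ => ((b / π * (v ^ 2 + b ^ 2)⁻¹ : ℝ) : ℂ) :=
    funext (fourier_exp_neg_abs hb)
  have hc : (0 : ℝ) < 2 * π * b := by positivity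
  have hint : Integrable f := by
    have h1 : IntegrableOn (fun t : ℝ => f t) (Set.Iic 0) := by
      refine (integrableOn_exp_mul_complex_Iic (a := (2 * π * b : ℝ)) (by simpa using hc)
        0).congr_fun (fun t ht => ?_) measurableSet_Iic
      simp only [hf, abs_of_nonpos (Set.mem_Iic.mp ht)]
      congr 1; push_cast; ring
    have h2 : IntegrableOn (fun t : ℝ => f t) (Set.Ioi 0) := by
      refine (integrableOn_exp_mul_complex_Ioi (a := (-(2 * π * b) : ℝ)) (by simpa using hc)
        0).congr_fun (fun t ht => ?_) measurableSet_Ioi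
      simp only [hf, abs_of_pos (Set.mem_Ioi.mp ht)]
      congr 1; push_cast; ring
    rw [← integrableOn_univ, ← Set.Iic_union_Ioi (a := (0 : ℝ))]
    exact h1.union h2
  have hFint : Integrable (𝓕 f) := by
    rw [hF]
    exact ((integrable_inv_sq_add_sq hb).const_mul _).ofReal
  have key := hint.fourierInv_fourier_eq hFint (hcont.continuousAt (x := a / (2 * π)))
  rw [Real.fourierInv_eq', hF] at key
  have key2 := congrArg Complex.re key
  rw [← RCLike.re_to_complex, ← integral_re] at key2
  · have e1 : ∀ v : ℝ, RCLike.re (Complex.exp (↑(2 * π * inner ℝ v (a / (2 * π))) * Complex.I) •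
        ((b / π * (v ^ 2 + b ^ 2)⁻¹ : ℝ) : ℂ))
        = b / π * (Real.cos (a * v) * (v ^ 2 + b ^ 2)⁻¹) := by
      intro v
      have : 2 * π * inner ℝ v (a / (2 * π)) = a * v := by
        simp; field_simp
      rw [this, smul_eq_mul, RCLike.re_to_complex, Complex.re_mul_ofReal,
        Complex.exp_ofReal_mul_I_re]
      ring
    simp only [e1] at key2
    rw [integral_const_mul, hf] at key2
    have e2 : (Complex.exp (-(2 * π * b * |a / (2 * π)| : ℝ))).re = Real.exp (-(a * b)) := by
      rw [← Complex.ofReal_neg, Complex.exp_ofReal_re, abs_of_nonneg (by positivity)]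
      congr 1; field_simp
    simp only [e2] at key2
    rw [← key2]
    field_simp
  · refine Integrable.bdd_mul (c := 1) (hF ▸ hFint) ?_ ?_
    · refine Continuous.aestronglyMeasurable ?_
      simp only [RCLike.inner_apply, conj_trivial]
      fun_prop
    · exact Eventually.of_forall fun x => by rw [Complex.norm_exp_ofReal_mul_I]

lemma integral_one_sub_cos {a b : ℝ} (ha : 0 ≤ a) (hb : 0 < b) :
    ∫ x in Set.Ioi (0 : ℝ), (1 - Real.cos (a * x)) / (x ^ 2 + b ^ 2)
      = π / (2 * b) * (1 - Real.exp (-(a * b))) := by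
  have h0 := integral_cos_mul_inv le_rfl hb
  have h1 := integral_cos_mul_inv ha hb
  have h2 := integral_comp_abs (f := fun x : ℝ => (1 - Real.cos (a * x)) / (x ^ 2 + b ^ 2))
  -- The constant `1` in the numerator is treated as the cosine of frequency `0`.
  have e : ∀ x : ℝ, (1 - Real.cos (a * |x|)) / (|x| ^ 2 + b ^ 2)
      = Real.cos (0 * x) * (x ^ 2 + b ^ 2)⁻¹ - Real.cos (a * x) * (x ^ 2 + b ^ 2)⁻¹ := by
    intro x
    have : Real.cos (a * |x|) = Real.cos (a * x) := by
      rcases abs_choice x with h | h <;> simp [h]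
    rw [this, sq_abs]
    simp
    ring
  simp only [e] at h2
  rw [integral_sub (integrable_cos_mul_inv 0 hb) (integrable_cos_mul_inv a hb), h0, h1] at h2
  simp only [zero_mul, neg_zero, Real.exp_zero] at h2
  have : π / (2 * b) * (1 - Real.exp (-(a * b)))
      = (π / b * 1 - π / b * Real.exp (-(a * b))) / 2 := by ring
  rw [this, h2]; ring

/-- The partial fraction expansion of `π coth (πu)`: Mathlib's cotangent series at the point `iu`,
multiplied by `i`. -/
lemma hasSum_coth {u : ℝ} (hu : 0 < u) :
    HasSum (fun n : ℕ => 2 * u / (u ^ 2 + (n + 1) ^ 2))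
      (π * (Real.cosh (π * u) / Real.sinh (π * u)) - 1 / u) := by
  have hz : (u * Complex.I : ℂ) ∈ Complex.integerComplement := by
    rw [Complex.mem_integerComplement_iff]
    rintro ⟨n, hn⟩
    have := congrArg Complex.im hn
    simp at this
    exact hu.ne this
  have h := (summable_cotTerm hz).hasSum_iff_tendsto_nat.mpr (tendsto_logDeriv_euler_cot_sub hz)
  have h' := h.mul_left Complex.I
  rw [← Complex.hasSum_ofReal]
  have hu' : (u : ℂ) ≠ 0 := by exact_mod_cast hu.ne'
  have hs : Complex.sinh (π * u) ≠ 0 := by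
    have : Real.sinh (π * u) ≠ 0 := (Real.sinh_pos_iff.mpr (by positivity)).ne'
    exact_mod_cast this
  convert! h' using 1
  · funext n
    rw [cotTerm_identity hz]
    have : (u ^ 2 + (n + 1) ^ 2 : ℂ)
        = -((u * Complex.I + (n + 1)) * (u * Complex.I - (n + 1))) := by
      linear_combination (u : ℂ) ^ 2 * Complex.I_sq
    push_cast
    rw [this, div_neg]
    linear_combination (-2 * u / ((u * Complex.I + (n + 1)) * (u * Complex.I - (n + 1))) : ℂ) * Complex.I_sq
  · push_cast
    rw [Complex.cot_eq_cos_div_sin, show (π * (u * Complex.I) : ℂ) = (π * u) * Complex.I by ring,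
      Complex.cos_mul_I, Complex.sin_mul_I]
    field_simp

/-- The partial fraction expansion of `π / sinh (πu)`. Flipping the signs of the terms of odd index
in the series for `coth (πu)` amounts to subtracting the series for `coth (πu/2)`, and
`coth (2w) - coth w = -1 / sinh (2w)`. -/
lemma hasSum_csch {u : ℝ} (hu : 0 < u) :
    HasSum (fun n : ℕ => (-1) ^ n * (2 * u / (u ^ 2 + (n + 1) ^ 2)))
      (1 / u - π / Real.sinh (π * u)) := by
  have h1 := hasSum_coth hu
  have h2 := hasSum_coth (half_pos hu)
  -- `g` is twice the part of the `coth (πu)` series supported on odd indices.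
  set g : ℕ → ℝ := fun n => if Even n then 0 else 2 * (2 * u / (u ^ 2 + (n + 1) ^ 2)) with hg
  have he : HasSum (fun k => g (2 * k)) 0 := by
    simp [hg, hasSum_zero]
  have ho : HasSum (fun k => g (2 * k + 1))
      (π * (Real.cosh (π * (u / 2)) / Real.sinh (π * (u / 2))) - 1 / (u / 2)) := by
    convert h2 using 1
    funext k
    have : ¬ Even (2 * k + 1) := by simp
    simp only [hg, if_neg this]
    push_cast
    have h3 : u ^ 2 + (2 * (k : ℝ) + 1 + 1) ^ 2 ≠ 0 := by positivity
    have h4 : (u / 2) ^ 2 + ((k : ℝ) + 1) ^ 2 ≠ 0 := by positivity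
    rw [show u ^ 2 + (2 * (k : ℝ) + 1 + 1) ^ 2 = 4 * ((u / 2) ^ 2 + ((k : ℝ) + 1) ^ 2) by ring]
    field_simp
    ring
  have h := h1.sub (he.even_add_odd ho)
  convert! h using 1
  · funext n
    simp only [hg]
    rcases Nat.even_or_odd n with hn | hn
    · simp [hn, hn.neg_one_pow]
    · rw [if_neg (Nat.not_even_iff_odd.mpr hn), hn.neg_one_pow]; ring
  · have hs : Real.sinh (π * (u / 2)) ≠ 0 := (Real.sinh_pos_iff.mpr (by positivity)).ne'
    have hc : Real.cosh (π * (u / 2)) ≠ 0 := (Real.cosh_pos _).ne'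
    rw [show π * u = 2 * (π * (u / 2)) by ring, Real.sinh_two_mul, Real.cosh_two_mul]
    have hsq := Real.cosh_sq (π * (u / 2))
    generalize Real.cosh (π * (u / 2)) = c at *
    generalize Real.sinh (π * (u / 2)) = s at *
    field_simp
    linear_combination (u * π) * hsq

lemma alternating_sum_bounds (n : ℕ) : ∀ {b : ℕ → ℝ}, Antitone b → (∀ k, 0 ≤ b k) →
    0 ≤ ∑ i ∈ Finset.range n, (-1) ^ i * b i ∧ ∑ i ∈ Finset.range n, (-1) ^ i * b i ≤ b 0 := by
  induction n with
  | zero => intro b _ h0; simpa using h0 0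
  | succ n ih =>
    intro b hb h0
    have h := ih (b := fun k => b (k + 1)) (fun i j hij => hb (by omega)) (fun k => h0 _)
    rw [Finset.sum_range_succ']
    have e : ∑ i ∈ Finset.range n, (-1 : ℝ) ^ (i + 1) * b (i + 1)
        = - ∑ i ∈ Finset.range n, (-1 : ℝ) ^ i * b (i + 1) := by
      rw [← Finset.sum_neg_distrib]
      exact Finset.sum_congr rfl fun i _ => by ring
    rw [e]
    have := hb (Nat.zero_le 1)
    simp only [zero_add] at h
    constructor <;> simp <;> linarith [h.1, h.2]

/-- The alternating harmonic series along partial sums of even length. The sum of the first `2N`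
terms is `H_{2N} - H_N`. -/
lemma tendsto_alternating_harmonic :
    Tendsto (fun N : ℕ => ∑ i ∈ Finset.range (2 * N), (-1 : ℝ) ^ i / (i + 1)) atTop
      (𝓝 (Real.log 2)) := by
  have e : ∀ N : ℕ, ∑ i ∈ Finset.range (2 * N), (-1 : ℝ) ^ i / (i + 1)
      = (harmonic (2 * N) : ℝ) - harmonic N := by
    intro N
    induction N with
    | zero => simp
    | succ n ih =>
      rw [show 2 * (n + 1) = 2 * n + 1 + 1 by ring, Finset.sum_range_succ, Finset.sum_range_succ,
        ih, harmonic_succ, harmonic_succ, harmonic_succ]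
      push_cast
      rw [pow_succ, pow_mul]
      field_simp
      ring
  have h1 := Real.tendsto_harmonic_sub_log
  have h2 := h1.comp (tendsto_id.const_mul_atTop' (by norm_num : 0 < 2))
  have h3 := (h2.sub h1).add_const (Real.log 2)
  simp only [sub_self, zero_add] at h3
  refine h3.congr' ?_
  filter_upwards [eventually_gt_atTop 0] with N hN
  have : (N : ℝ) ≠ 0 := by positivity
  simp only [Function.comp, id, e]
  push_cast
  rw [Real.log_mul (by norm_num) this]
  ring

theorem integral_L1_distance (Δ : ℝ) (hΔ : 0 < Δ) :
    ∫ x in Set.Ioi (0 : ℝ),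
        (2 / x - 1 / Real.sinh (x / 2)) * (2 * (1 - Real.cos (2 * Δ * x)) / x)
      = 2 * Real.log 2 - 2 * Real.log (1 + Real.exp (-(4 * π * Δ))) := by
  have hpi := Real.pi_pos
  set B : ℕ → ℝ := fun n => 2 * π * (n + 1) with hB
  have hBpos : ∀ n, 0 < B n := fun n => by positivity
  set t : ℕ → ℝ → ℝ := fun n x => 8 * ((1 - Real.cos (2 * Δ * x)) / (x ^ 2 + B n ^ 2)) with ht
  set q : ℝ := Real.exp (-(4 * π * Δ)) with hq
  have htint : ∀ n, Integrable (t n) := fun n => by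
    refine (((integrable_cos_mul_inv 0 (hBpos n)).sub
      (integrable_cos_mul_inv (2 * Δ) (hBpos n))).const_mul 8).congr
      (Eventually.of_forall fun x => ?_)
    simp [ht]; ring
  have hnum : ∀ x, 0 ≤ 1 - Real.cos (2 * Δ * x) := fun x => by
    linarith [Real.cos_le_one (2 * Δ * x)]
  have hlim : Tendsto (fun N : ℕ => ∫ x in Set.Ioi (0 : ℝ),
      ∑ i ∈ Finset.range N, (-1) ^ i * t i x) atTop (𝓝 (∫ x in Set.Ioi (0 : ℝ),
        (2 / x - 1 / Real.sinh (x / 2)) * (2 * (1 - Real.cos (2 * Δ * x)) / x))) := by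
    -- The alternating partial sums are dominated by the first term.
    refine tendsto_integral_of_dominated_convergence (t 0) (fun N => ?_) (htint 0).integrableOn
      (fun N => ?_) ?_
    · exact (integrable_finsetSum _ fun i _ =>
        ((htint i).integrableOn.const_mul _)).aestronglyMeasurable
    · refine Eventually.of_forall fun x => ?_
      have h := alternating_sum_bounds N (b := fun i => t i x) (fun i j hij => ?_) (fun k => ?_)
      · rw [Real.norm_of_nonneg h.1]; exact h.2
      · have := hnum x
        have := hBpos i
        have : B i ≤ B j := by simp only [hB]; gcongr
        simp only [ht]
        gcongr
      · have := hnum x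
        simp only [ht]; positivity
    · refine (ae_restrict_iff' measurableSet_Ioi).mpr (Eventually.of_forall fun x hx => ?_)
      have hx : 0 < x := hx
      have h := ((hasSum_csch (u := x / (2 * π)) (by positivity)).mul_right
        ((1 / π) * (2 * (1 - Real.cos (2 * Δ * x)) / x))).tendsto_sum_nat
      convert h using 2
      · refine Finset.sum_congr rfl fun i _ => ?_
        simp only [ht, hB]
        have : x ^ 2 + (2 * π * ((i : ℝ) + 1)) ^ 2 ≠ 0 := by positivity
        have : (x / (2 * π)) ^ 2 + ((i : ℝ) + 1) ^ 2 ≠ 0 := by positivity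
        rw [show x ^ 2 + (2 * π * ((i : ℝ) + 1)) ^ 2
          = (2 * π) ^ 2 * ((x / (2 * π)) ^ 2 + ((i : ℝ) + 1) ^ 2) by field_simp]
        field_simp
        ring
      · rw [show π * (x / (2 * π)) = x / 2 by field_simp]
        field_simp
  have hval : ∀ N : ℕ, ∫ x in Set.Ioi (0 : ℝ), ∑ i ∈ Finset.range N, (-1) ^ i * t i x
      = 2 * ∑ i ∈ Finset.range N, (-1 : ℝ) ^ i / (i + 1)
        + 2 * ∑ i ∈ Finset.range N, (-q) ^ (i + 1) / (i + 1) := by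
    intro N
    rw [integral_finsetSum _ fun i _ => ((htint i).integrableOn.const_mul _), Finset.mul_sum,
      Finset.mul_sum, ← Finset.sum_add_distrib]
    refine Finset.sum_congr rfl fun i _ => ?_
    simp only [ht]
    rw [integral_const_mul, integral_const_mul, integral_one_sub_cos (by positivity) (hBpos i)]
    have : Real.exp (-(2 * Δ * B i)) = q ^ (i + 1) := by
      rw [hq, ← Real.exp_nat_mul]; congr 1; simp only [hB]; push_cast; ring
    rw [this, neg_pow q, pow_succ (-1 : ℝ)]
    simp only [hB]
    field_simp
    ring
  have hq1 : |(-q)| < 1 := by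
    rw [abs_neg, abs_of_pos (Real.exp_pos _), Real.exp_lt_one_iff]
    simp; positivity
  have h2N : Tendsto (fun N : ℕ => 2 * N) atTop atTop :=
    tendsto_id.const_mul_atTop' (by norm_num : 0 < 2)
  have hlog := (Real.hasSum_pow_div_log_of_abs_lt_one hq1).tendsto_sum_nat.comp h2N
  have hR := (tendsto_alternating_harmonic.const_mul 2).add (hlog.const_mul 2)
  simp only [hval] at hlim
  have := tendsto_nhds_unique (hlim.comp h2N) hR
  rw [this, sub_neg_eq_add]
  ring
end

section
/- For all real Δ > 0, α > 0, and x, one has 2π ∫_{−Δ}^{Δ} (1 − |t|/Δ) e^{−2πα|t|} e^{−2πitx} dt = 2α/(α² + x²) − (1/(πΔ)) Re( (1 − e^{−2πΔ(α + ix)}) / (α + ix)² ). -/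
/-!
The integrand on `[-Δ, 0]` is the reflection of the one on `[0, Δ]` with `x` replaced by `-x`, so
the integral is `J(c) + J(conj c)` with `c = 2π(α + ix)` and `J(c) = ∫₀^Δ (1 - t/Δ) e^{-ct} dt`.
An explicit antiderivative gives `J(c) = 1/c - (1 - e^{-cΔ})/(Δc²)` (`integral_tent_mul_exp`).
This expression commutes with conjugation, so the sum is twice its real part.
-/

open Real Complex MeasureTheory intervalIntegral

theorem integral_tent_mul_exp (Δ : ℝ) (hΔ : 0 < Δ) (c : ℂ) (hc : c ≠ 0) :
    ∫ t in (0 : ℝ)..Δ, (1 - (t : ℂ) / Δ) * Complex.exp (-(c * t))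
      = 1 / c - (1 - Complex.exp (-(c * Δ))) / (Δ * c ^ 2) := by
  have hΔ' : (Δ : ℂ) ≠ 0 := by exact_mod_cast hΔ.ne'
  have key : ∀ t ∈ Set.uIcc (0 : ℝ) Δ, HasDerivAt
      (fun t : ℝ => -((1 - (t : ℂ) / Δ) * Complex.exp (-(c * t))) / c
        + Complex.exp (-(c * t)) / (Δ * c ^ 2))
      ((1 - (t : ℂ) / Δ) * Complex.exp (-(c * t))) t := by
    intro t _
    have h1 : HasDerivAt (fun t : ℝ => (t : ℂ)) 1 t := Complex.ofRealCLM.hasDerivAt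
    have he : HasDerivAt (fun t : ℝ => Complex.exp (-(c * t)))
        (Complex.exp (-(c * t)) * -(c * 1)) t := (h1.const_mul c).neg.cexp
    have hl : HasDerivAt (fun t : ℝ => 1 - (t : ℂ) / Δ) (-(1 / (Δ : ℂ))) t :=
      (h1.div_const _).const_sub 1
    refine (((hl.mul he).neg.div_const c).add (he.div_const _)).congr_deriv ?_
    field_simp
    ring
  rw [integral_eq_sub_of_hasDerivAt key (Continuous.intervalIntegrable (by fun_prop) _ _)]
  simp only [div_self hΔ', Complex.ofReal_zero, mul_zero, neg_zero, Complex.exp_zero, zero_div]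
  field_simp
  ring

theorem K_Delta_formula (Δ α x : ℝ) (hΔ : 0 < Δ) (hα : 0 < α) :
    2 * π * ∫ t in (-Δ)..Δ,
        ((1 - |t| / Δ) * Real.exp (-(2 * π * α * |t|)) : ℂ) *
          Complex.exp (-(2 * π * I * t * x))
      = ((2 * α / (α ^ 2 + x ^ 2) -
          1 / (π * Δ) *
            ((1 - Complex.exp (-(2 * π * Δ * (α + x * I)))) / (α + x * I) ^ 2).re : ℝ) : ℂ) := by
  have hΔ' : (Δ : ℂ) ≠ 0 := by exact_mod_cast hΔ.ne'
  have hπ : (π : ℂ) ≠ 0 := by exact_mod_cast Real.pi_ne_zero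
  have hw : ∀ y : ℝ, (α + y * I : ℂ) ≠ 0 := by
    intro y h
    have := congrArg Complex.re h
    simp at this
    exact hα.ne' this
  set f : ℝ → ℂ := fun t => ((1 - |t| / Δ) * Real.exp (-(2 * π * α * |t|)) : ℂ) *
          Complex.exp (-(2 * π * I * t * x)) with hf
  have hcont : Continuous f := by
    have : Continuous fun t : ℝ => ((|t| : ℝ) : ℂ) := Complex.continuous_ofReal.comp continuous_abs
    fun_prop
  have hR : ∫ t in (0 : ℝ)..Δ, f t
      = ∫ t in (0 : ℝ)..Δ, (1 - (t : ℂ) / Δ) * Complex.exp (-((2 * π * (α + x * I)) * t)) := by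
    refine integral_congr fun t ht => ?_
    rw [Set.uIcc_of_le hΔ.le] at ht
    simp only [hf, abs_of_nonneg ht.1, Complex.ofReal_exp, mul_assoc, ← Complex.exp_add]
    push_cast
    ring_nf
  have hL : ∫ t in (-Δ)..0, f t
      = ∫ t in (0 : ℝ)..Δ,
          (1 - (t : ℂ) / Δ) * Complex.exp (-((2 * π * (α + (-x : ℝ) * I)) * t)) := by
    have : ∫ t in (-Δ)..0, f t = ∫ t in (0 : ℝ)..Δ, f (-t) := by simp
    rw [this]
    refine integral_congr fun t ht => ?_
    rw [Set.uIcc_of_le hΔ.le] at ht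
    simp only [hf, abs_neg, abs_of_nonneg ht.1, Complex.ofReal_exp, mul_assoc, ← Complex.exp_add]
    push_cast
    ring_nf
  have h2 : ∀ y : ℝ, (2 * π * (α + y * I) : ℂ) ≠ 0 := fun y =>
    mul_ne_zero (mul_ne_zero two_ne_zero hπ) (hw y)
  rw [← integral_add_adjacent_intervals (hcont.intervalIntegrable (-Δ) 0)
    (hcont.intervalIntegrable 0 Δ), hL, hR, integral_tent_mul_exp Δ hΔ _ (h2 _),
    integral_tent_mul_exp Δ hΔ _ (h2 _)]
  have hre : (2 * α / (α ^ 2 + x ^ 2) : ℝ) = 2 * (1 / (α + x * I : ℂ)).re := by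
    have : (1 / (α + x * I : ℂ)).re = α / (α ^ 2 + x ^ 2) := by
      rw [one_div, Complex.inv_re, Complex.normSq_add_mul_I]
      simp
    rw [this]
    ring
  have hconj : (starRingEnd ℂ) (α + x * I : ℂ) = α + (-x : ℝ) * I := by
    simp
  rw [hre]
  set w : ℂ := α + x * I with hwdef
  rw [← hconj]
  have hw0 : w ≠ 0 := hw x
  have hw1 : (starRingEnd ℂ) w ≠ 0 := by simpa using hw0
  -- both real parts are half the sum of a number and its conjugate
  have hRe : ∀ z : ℂ, (z.re : ℂ) = (z + (starRingEnd ℂ) z) / 2 := fun z => by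
    rw [Complex.add_conj]; push_cast; ring
  push_cast
  rw [hRe, hRe]
  simp only [map_div₀, map_sub, map_one, map_pow, ← Complex.exp_conj, map_neg, map_mul,
    Complex.conj_ofReal, Complex.conj_ofNat]
  rw [show 2 * (π : ℂ) * (starRingEnd ℂ) w * Δ = 2 * π * Δ * (starRingEnd ℂ) w by ring,
    show 2 * (π : ℂ) * w * Δ = 2 * π * Δ * w by ring]
  generalize Complex.exp (-(2 * π * Δ * w)) = E
  generalize Complex.exp (-(2 * π * Δ * (starRingEnd ℂ) w)) = E'
  generalize (starRingEnd ℂ) w = w' at hw1 ⊢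
  field_simp
  ring
end

section
/- Let λ₀ denote the unique positive real number satisfying e^{−λ₀} = λ₀ + λ₀²/2. Let Δ > 0 and let α₀ satisfy λ₀/(2πΔ) ≤ α₀ ≤ 2. Then for every real x ≠ 0, log((4 + x²)/x²) ≥ ∫_{α₀}^{2} K_Δ(α, x) dα − (1/(πΔ)) · 2/(4 + x²), where K_Δ(α, x) = 2π ∫_{−Δ}^{Δ} (1 − |t|/Δ) e^{−2πα|t|} e^{−2πitx} dt. -/
/-!
The identity `log ((4 + x²) / x²) = ∫₀² 2α / (α² + x²) dα` is compared with the integral of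
`K_Δ(α, x)`. With `w = 2π(α + ix)`, each half of the integral defining `K_Δ` has the closed form
`1/w - (1 - e^{-wΔ}) / (Δ w²)` (`integral_triangle_exp`), up to replacing `x` by `-x`.
Since `Re (e^{-wΔ} / w²) ≤ e^{-2πΔα} / |w|²`, this gives for `α ≥ α₀` the elementary bound
`K_Δ(α, x) ≤ 2α/(α²+x²) - (1/πΔ) (α²-x²)/(α²+x²)² + (1/πΔ) e^{-2πΔα}/(α₀²+x²)`
(`KDelta_le`), whose right-hand side has an explicit antiderivative in `α`. Integrating over
`[α₀, 2]` and writing `L = 2πΔα₀`, the claim reduces to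
`log (1 + α₀²/x²) ≥ (2e^{-L} - 2L) / ((2πΔ)² (α₀² + x²))`. As `log (1 + u) ≥ u/(1+u)`, it is enough
that `e^{-L} ≤ L + L²/2`, which holds for all `L ≥ l₀` by monotonicity.
-/


open Real Complex MeasureTheory intervalIntegral

/-- `K_Δ(α, x) = 2π ∫_{-Δ}^{Δ} (1 - |t|/Δ) e^{-2πα|t|} e^{-2πitx} dt` (a real number,
taken as the real part of the complex integral). -/
noncomputable def KDelta (Δ α x : ℝ) : ℝ :=
  (2 * π * ∫ t in (-Δ)..Δ,
    ((1 - |t| / Δ) * Real.exp (-(2 * π * α * |t|)) : ℂ) *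
      Complex.exp (-(2 * π * I * t * x))).re

/-- The integral `∫₀^Δ (1 - t/Δ) e^{-wt} dt` for `w ≠ 0`, in closed form. -/
noncomputable def triH (Δ : ℝ) (w : ℂ) : ℂ :=
  1 / w - (1 - Complex.exp (-(w * Δ))) / (Δ * w ^ 2)

lemma integral_triangle_exp (Δ : ℝ) (hΔ : 0 < Δ) (w : ℂ) (hw : w ≠ 0) :
    ∫ t in (0 : ℝ)..Δ, (1 - (t : ℂ) / Δ) * Complex.exp (-(w * t)) = triH Δ w := by
  have hΔ' : (Δ : ℂ) ≠ 0 := by exact_mod_cast hΔ.ne'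
  have hder : ∀ t ∈ Set.uIcc 0 Δ, HasDerivAt
      (fun t : ℝ => -((1 - (t : ℂ) / Δ) * Complex.exp (-(w * t))) / w
        + Complex.exp (-(w * t)) / (Δ * w ^ 2))
      ((1 - (t : ℂ) / Δ) * Complex.exp (-(w * t))) t := by
    intro t _
    have h1 : HasDerivAt (fun t : ℝ => (t : ℂ)) 1 t := Complex.ofRealCLM.hasDerivAt
    have h2 : HasDerivAt (fun t : ℝ => Complex.exp (-(w * t)))
        (Complex.exp (-(w * t)) * (-(w * 1))) t := ((h1.const_mul w).neg).cexp
    have h3 : HasDerivAt (fun t : ℝ => 1 - (t : ℂ) / Δ) (-(1 / Δ)) t :=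
      (h1.div_const _).const_sub 1
    refine ((((h3.mul h2).neg).div_const w).add (h2.div_const (Δ * w ^ 2))).congr_deriv ?_
    field_simp
    ring
  rw [integral_eq_sub_of_hasDerivAt hder
    (by apply Continuous.intervalIntegrable; fun_prop)]
  simp only [triH, Complex.ofReal_zero, mul_zero, neg_zero, Complex.exp_zero, zero_div]
  field_simp
  ring

lemma w_ne_zero (α y : ℝ) (hy : y ≠ 0) : (2 * π * (α + y * I) : ℂ) ≠ 0 := by
  have : (α + y * I : ℂ) ≠ 0 := by
    intro h
    have := congrArg Complex.im h
    simp at this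
    exact hy this
  have hpi : (π : ℂ) ≠ 0 := by exact_mod_cast pi_ne_zero
  exact mul_ne_zero (mul_ne_zero two_ne_zero hpi) this

/-- The closed form of `K_Δ`: the halves `t > 0` and `t < 0` of the defining integral contribute the
values of `triH` at `2π(α + ix)` and `2π(α - ix)`. -/
lemma KDelta_eq (Δ : ℝ) (hΔ : 0 < Δ) (α x : ℝ) (hx : x ≠ 0) :
    KDelta Δ α x = 2 * π * (triH Δ (2 * π * (α + x * I))).re
      + 2 * π * (triH Δ (2 * π * (α + (-x : ℝ) * I))).re := by
  unfold KDelta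
  have hc : Continuous (fun t : ℝ => ((1 - |t| / Δ) * Real.exp (-(2 * π * α * |t|)) : ℂ) *
      Complex.exp (-(2 * π * I * t * x))) := by fun_prop
  rw [← integral_add_adjacent_intervals (b := 0) (hc.intervalIntegrable _ _)
    (hc.intervalIntegrable _ _)]
  have h1 : (∫ t in (0 : ℝ)..Δ, ((1 - |t| / Δ) * Real.exp (-(2 * π * α * |t|)) : ℂ) *
      Complex.exp (-(2 * π * I * t * x))) = triH Δ (2 * π * (α + x * I)) := by
    rw [← integral_triangle_exp Δ hΔ _ (w_ne_zero α x hx)]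
    apply integral_congr
    intro t ht
    rw [Set.uIcc_of_le hΔ.le] at ht
    simp only [abs_of_nonneg ht.1]
    push_cast
    rw [mul_assoc, ← Complex.exp_add]
    congr 2
    ring
  have h2 : (∫ t in (-Δ)..0, ((1 - |t| / Δ) * Real.exp (-(2 * π * α * |t|)) : ℂ) *
      Complex.exp (-(2 * π * I * t * x))) = triH Δ (2 * π * (α + (-x : ℝ) * I)) := by
    rw [← integral_triangle_exp Δ hΔ _ (w_ne_zero α (-x) (neg_ne_zero.mpr hx))]
    have := integral_comp_neg (a := 0) (b := Δ)
      (fun t : ℝ => ((1 - |t| / Δ) * Real.exp (-(2 * π * α * |t|)) : ℂ) *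
      Complex.exp (-(2 * π * I * t * x)))
    rw [neg_zero] at this
    rw [← this]
    apply integral_congr
    intro t ht
    rw [Set.uIcc_of_le hΔ.le] at ht
    simp only [abs_neg, abs_of_nonneg ht.1]
    push_cast
    rw [mul_assoc, ← Complex.exp_add]
    congr 2
    ring
  rw [h1, h2]
  have : (2 * π : ℂ) = ((2 * π : ℝ) : ℂ) := by push_cast; rfl
  rw [this, Complex.re_ofReal_mul, Complex.add_re]
  ring

lemma triH_re_le (Δ : ℝ) (hΔ : 0 < Δ) (α y : ℝ) (hy : y ≠ 0) :
    2 * π * (triH Δ (2 * π * (α + y * I))).re ≤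
      α / (α ^ 2 + y ^ 2) + 1 / (2 * π * Δ) * (-(α ^ 2 - y ^ 2) / (α ^ 2 + y ^ 2) ^ 2
        + Real.exp (-(2 * π * Δ * α)) / (α ^ 2 + y ^ 2)) := by
  have hpos : 0 < α ^ 2 + y ^ 2 := by positivity
  have hpi := pi_pos
  set z : ℂ := α + y * I with hz
  have hzre : z.re = α := by simp [hz]
  have hzim : z.im = y := by simp [hz]
  have hns : Complex.normSq z = α ^ 2 + y ^ 2 := by
    rw [Complex.normSq_apply, hzre, hzim]; ring
  have hz0 : z ≠ 0 := by
    intro h; rw [h] at hzim; simp at hzim; exact hy hzim.symm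
  have hpiC : (π : ℂ) ≠ 0 := by exact_mod_cast pi_ne_zero
  have hΔC : (Δ : ℂ) ≠ 0 := by exact_mod_cast hΔ.ne'
  have hsplit : ((2 * π : ℝ) : ℂ) * triH Δ (2 * π * z) = z⁻¹ +
      ((1 / (2 * π * Δ) : ℝ) : ℂ) *
        (-(z ^ 2)⁻¹ + Complex.exp (-(2 * π * z * Δ)) * (z ^ 2)⁻¹) := by
    unfold triH
    push_cast
    field_simp
    ring
  have hre1 : (z⁻¹).re = α / (α ^ 2 + y ^ 2) := by
    rw [Complex.inv_re, hzre, hns]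
  have hre2 : ((z ^ 2)⁻¹).re = (α ^ 2 - y ^ 2) / (α ^ 2 + y ^ 2) ^ 2 := by
    rw [Complex.inv_re, map_pow, hns, pow_two z, Complex.mul_re, hzre, hzim]
    ring
  have hre3 : (Complex.exp (-(2 * π * z * Δ)) * (z ^ 2)⁻¹).re ≤
      Real.exp (-(2 * π * Δ * α)) / (α ^ 2 + y ^ 2) := by
    refine (Complex.re_le_norm _).trans (le_of_eq ?_)
    rw [norm_mul, Complex.norm_exp, norm_inv, norm_pow, ← Complex.normSq_eq_norm_sq, hns,
      div_eq_mul_inv]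
    congr 2
    have : (-(2 * π * z * Δ) : ℂ) = ((-(2 * π * Δ) : ℝ) : ℂ) * z := by push_cast; ring
    rw [this, Complex.re_ofReal_mul, hzre]
    ring
  rw [← Complex.re_ofReal_mul, hsplit, Complex.add_re, Complex.re_ofReal_mul, Complex.add_re,
    Complex.neg_re, hre1, hre2, neg_div]
  gcongr

lemma KDelta_le (Δ : ℝ) (hΔ : 0 < Δ) (α₀ α x : ℝ) (hα₀ : 0 < α₀) (hα : α₀ ≤ α) (hx : x ≠ 0) :
    KDelta Δ α x ≤ 2 * α / (α ^ 2 + x ^ 2) + 1 / (π * Δ) *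
      (-(α ^ 2 - x ^ 2) / (α ^ 2 + x ^ 2) ^ 2
        + Real.exp (-(2 * π * Δ * α)) / (α₀ ^ 2 + x ^ 2)) := by
  have h1 := triH_re_le Δ hΔ α x hx
  have h2 := triH_re_le Δ hΔ α (-x) (neg_ne_zero.mpr hx)
  rw [neg_sq] at h2
  have h3 : Real.exp (-(2 * π * Δ * α)) / (α ^ 2 + x ^ 2) ≤
      Real.exp (-(2 * π * Δ * α)) / (α₀ ^ 2 + x ^ 2) := by gcongr
  have hpi := pi_pos
  rw [KDelta_eq Δ hΔ α x hx]
  refine (add_le_add h1 h2).trans ?_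
  calc _ = 2 * α / (α ^ 2 + x ^ 2) + 1 / (π * Δ) *
      (-(α ^ 2 - x ^ 2) / (α ^ 2 + x ^ 2) ^ 2
        + Real.exp (-(2 * π * Δ * α)) / (α ^ 2 + x ^ 2)) := by
        field_simp
        ring
    _ ≤ _ := by gcongr

lemma continuous_KDelta (Δ : ℝ) (hΔ : 0 < Δ) (x : ℝ) (hx : x ≠ 0) :
    Continuous (fun α : ℝ => KDelta Δ α x) := by
  have hΔC : (Δ : ℂ) ≠ 0 := by exact_mod_cast hΔ.ne'
  have key : ∀ y : ℝ, y ≠ 0 →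
      Continuous (fun α : ℝ => triH Δ (2 * π * (α + y * I))) := by
    intro y hy
    unfold triH
    refine Continuous.sub (Continuous.div (by fun_prop) (by fun_prop) ?_)
      (Continuous.div (by fun_prop) (by fun_prop) ?_)
    · intro α; exact w_ne_zero α y hy
    · intro α; exact mul_ne_zero hΔC (pow_ne_zero 2 (w_ne_zero α y hy))
  simp_rw [KDelta_eq Δ hΔ _ x hx]
  have k1 := Complex.continuous_re.comp (key x hx)
  have k2 := Complex.continuous_re.comp (key (-x) (neg_ne_zero.mpr hx))
  exact (k1.const_mul (2 * π)).add (k2.const_mul (2 * π))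

theorem minorant_from_K_integral
    (l₀ : ℝ) (hl₀ : 0 < l₀) (hl₀eq : Real.exp (-l₀) = l₀ + l₀ ^ 2 / 2)
    (Δ : ℝ) (hΔ : 0 < Δ) (α₀ : ℝ) (hα₀ : l₀ / (2 * π * Δ) ≤ α₀) (hα₀' : α₀ ≤ 2)
    (x : ℝ) (hx : x ≠ 0) :
    Real.log ((4 + x ^ 2) / x ^ 2) ≥
      (∫ α in α₀..2, KDelta Δ α x) - 1 / (π * Δ) * (2 / (4 + x ^ 2)) := by
  have hpi := pi_pos
  have hα₀pos : 0 < α₀ := lt_of_lt_of_le (by positivity) hα₀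
  have hx2 : 0 < x ^ 2 := by positivity
  have hL : l₀ ≤ 2 * π * Δ * α₀ := by
    rw [div_le_iff₀ (by positivity)] at hα₀; linarith
  set B : ℝ → ℝ := fun α => 2 * α / (α ^ 2 + x ^ 2) + 1 / (π * Δ) *
      (-(α ^ 2 - x ^ 2) / (α ^ 2 + x ^ 2) ^ 2
        + Real.exp (-(2 * π * Δ * α)) / (α₀ ^ 2 + x ^ 2)) with hB
  have hne : ∀ α : ℝ, α ^ 2 + x ^ 2 ≠ 0 := fun α => by positivity
  have hBc : Continuous B := by
    have hne2 : ∀ α : ℝ, (α ^ 2 + x ^ 2) ^ 2 ≠ 0 := fun α => by positivity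
    refine Continuous.add (Continuous.div (by fun_prop) (by fun_prop) hne)
      (Continuous.const_mul (Continuous.add (Continuous.div (by fun_prop) (by fun_prop) hne2)
        (by fun_prop)) _)
  have hmono : (∫ α in α₀..2, KDelta Δ α x) ≤ ∫ α in α₀..2, B α := by
    apply integral_mono_on hα₀' ((continuous_KDelta Δ hΔ x hx).intervalIntegrable _ _)
      (hBc.intervalIntegrable _ _)
    intro α hα
    exact KDelta_le Δ hΔ α₀ α x hα₀pos hα.1 hx
  have hder : ∀ α ∈ Set.uIcc α₀ 2, HasDerivAt
      (fun α : ℝ => Real.log (α ^ 2 + x ^ 2) + 1 / (π * Δ) * (α / (α ^ 2 + x ^ 2)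
        + -(Real.exp (-(2 * π * Δ * α)) / (2 * π * Δ)) / (α₀ ^ 2 + x ^ 2))) (B α) α := by
    intro α _
    have h0 := hne α
    have h1 : HasDerivAt (fun α : ℝ => α ^ 2 + x ^ 2) (2 * α) α := by
      simpa using (hasDerivAt_pow 2 α).add_const (x ^ 2)
    have h2 : HasDerivAt (fun α : ℝ => Real.exp (-(2 * π * Δ * α)))
        (Real.exp (-(2 * π * Δ * α)) * (-(2 * π * Δ * 1))) α :=
      (((hasDerivAt_id' α).const_mul (2 * π * Δ)).neg).exp
    refine ((h1.log h0).add (((((hasDerivAt_id' α).div h1 h0).add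
      (((h2.div_const (2 * π * Δ)).neg).div_const (α₀ ^ 2 + x ^ 2)))).const_mul
        (1 / (π * Δ)))).congr_deriv ?_
    have h3 : α₀ ^ 2 + x ^ 2 ≠ 0 := hne α₀
    simp only [hB]
    field_simp
    ring
  rw [integral_eq_sub_of_hasDerivAt hder (hBc.intervalIntegrable _ _)] at hmono
  have hexp : Real.exp (-(2 * π * Δ * α₀)) ≤
      2 * π * Δ * α₀ + (2 * π * Δ * α₀) ^ 2 / 2 := by
    have e1 : Real.exp (-(2 * π * Δ * α₀)) ≤ Real.exp (-l₀) := by gcongr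
    have e2 : l₀ ^ 2 ≤ (2 * π * Δ * α₀) ^ 2 := by gcongr
    linarith
  have hlog : Real.log (α₀ ^ 2 + x ^ 2) - Real.log (x ^ 2) ≥ α₀ ^ 2 / (α₀ ^ 2 + x ^ 2) := by
    have := Real.one_sub_inv_le_log_of_pos (x := (α₀ ^ 2 + x ^ 2) / x ^ 2) (by positivity)
    rw [Real.log_div (hne α₀) hx2.ne'] at this
    have e : 1 - ((α₀ ^ 2 + x ^ 2) / x ^ 2)⁻¹ = α₀ ^ 2 / (α₀ ^ 2 + x ^ 2) := by
      field_simp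
      ring
    linarith
  have hfin : 1 / (π * Δ) * (Real.exp (-(2 * π * Δ * α₀)) / (2 * π * Δ) / (α₀ ^ 2 + x ^ 2)) ≤
      α₀ ^ 2 / (α₀ ^ 2 + x ^ 2) + 1 / (π * Δ) * (α₀ / (α₀ ^ 2 + x ^ 2)) := by
    calc _ ≤ 1 / (π * Δ) * ((2 * π * Δ * α₀ + (2 * π * Δ * α₀) ^ 2 / 2) / (2 * π * Δ)
        / (α₀ ^ 2 + x ^ 2)) := by gcongr
      _ = _ := by
        field_simp
        ring
  -- The boundary term at `α = 2` coming from the exponential has the favourable sign.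
  have hdrop : 0 ≤ 1 / (π * Δ) *
      (Real.exp (-(2 * π * Δ * 2)) / (2 * π * Δ) / (α₀ ^ 2 + x ^ 2)) := by positivity
  rw [Real.log_div (by positivity) hx2.ne']
  norm_num only [neg_div, mul_add, mul_neg] at *
  linarith
end
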